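/- For every real z and every real φ, the real part of the Jacobi–Anger expansion holds: cos(z cos φ) = J₀(z) + 2 Σ_{m=1}^{∞} (−1)^m J_{2m}(z) cos(2mφ), and the imaginary part holds: sin(z cos φ) = 2 Σ_{m=0}^{∞} (−1)^m J_{2m+1}(z) cos((2m+1)φ), both series converging. -/

import Mathlib

/-!
The function `θ ↦ exp(i z sin θ)` is `2π`-periodic, and its `n`-th Fourier coefficient is
`cₙ = (1/π) ∫₀^π cos(nθ − z sin θ) dθ` for every integer `n` (fold the integral over `[-π, π]` at
the origin). Integrating the derivative of `sin(nθ − z sin θ)` gives the recurrence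
`2 n cₙ = z (cₙ₋₁ + cₙ₊₁)`; applied twice to `|cₙ| ≤ 1` it yields `n² |cₙ| ≤ |z| (|z| + 1)`, so the
Fourier series converges absolutely, hence pointwise to the function
(`hasSum_besselZ_mul_exp`). The two expansions are the real and imaginary parts at
`θ = φ + π/2`, with the terms `n` and `-n` combined by the reflection `c₋ₙ = (-1)ⁿ cₙ`.
-/

/-- Bessel function of the first kind of integer order `n`, via Bessel's integral
`Jₙ(z) = (1/π) ∫₀^π cos(nθ − z sin θ) dθ`. -/
noncomputable def besselJ (n : ℕ) (z : ℝ) : ℝ :=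
  (1 / Real.pi) * ∫ θ in (0:ℝ)..Real.pi, Real.cos (n * θ - z * Real.sin θ)

open Real intervalIntegral

/-- Bessel's integral for an arbitrary integer order. -/
noncomputable def besselZ (n : ℤ) (z : ℝ) : ℝ :=
  (1 / π) * ∫ θ in (0:ℝ)..π, cos (n * θ - z * sin θ)

lemma besselZ_natCast (n : ℕ) (z : ℝ) : besselZ n z = besselJ n z := by
  simp [besselZ, besselJ]

/-- The substitution `θ ↦ π - θ` in Bessel's integral. -/
lemma besselZ_neg (n : ℤ) (z : ℝ) : besselZ (-n) z = (-1) ^ n * besselZ n z := by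
  have h := integral_comp_sub_left (a := 0) (b := π)
    (fun θ => cos (((-n : ℤ) : ℝ) * θ - z * sin θ)) π
  simp only [sub_self, sub_zero] at h
  unfold besselZ
  rw [← h, mul_left_comm, ← intervalIntegral.integral_const_mul ((-1 : ℝ) ^ n)]
  congr 1
  refine intervalIntegral.integral_congr fun θ _ => ?_
  rw [sin_pi_sub, ← cos_sub_int_mul_pi]
  push_cast
  congr 1
  ring

lemma abs_besselZ_le_one (n : ℤ) (z : ℝ) : |besselZ n z| ≤ 1 := by
  have h : ‖∫ θ in (0:ℝ)..π, cos (n * θ - z * sin θ)‖ ≤ 1 * |π - 0| :=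
    norm_integral_le_of_norm_le_const fun θ _ => abs_cos_le_one _
  rw [sub_zero, abs_of_pos pi_pos, one_mul, norm_eq_abs] at h
  rw [besselZ, abs_mul, abs_of_pos (by positivity), one_div, inv_mul_le_iff₀ pi_pos]
  simpa using h

/-- The recurrence `2 n Jₙ = z (Jₙ₋₁ + Jₙ₊₁)`: up to a constant factor, the difference of its two sides is the integral of
the derivative of `sin (n θ - z sin θ)`, which vanishes at both endpoints. -/
lemma besselZ_recurrence (n : ℤ) (z : ℝ) :
    2 * n * besselZ n z = z * (besselZ (n - 1) z + besselZ (n + 1) z) := by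
  have hd : ∀ θ ∈ Set.uIcc (0:ℝ) π, HasDerivAt (fun θ : ℝ => sin (n * θ - z * sin θ))
      (cos (n * θ - z * sin θ) * (n - z * cos θ)) θ := fun θ _ => by
    have h := (((hasDerivAt_id θ).const_mul (n : ℝ)).sub ((hasDerivAt_sin θ).const_mul z)).sin
    simpa using h
  have h0 := integral_eq_sub_of_hasDerivAt hd
    (Continuous.intervalIntegrable (by fun_prop) _ _)
  simp only [sin_pi, mul_zero, sub_zero, sin_int_mul_pi, sin_zero] at h0
  have h1 : (∫ θ in (0:ℝ)..π, cos (n * θ - z * sin θ) * (n - z * cos θ)) =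
      n * (∫ θ in (0:ℝ)..π, cos (n * θ - z * sin θ)) -
        z / 2 * ((∫ θ in (0:ℝ)..π, cos ((n - 1 : ℤ) * θ - z * sin θ)) +
          ∫ θ in (0:ℝ)..π, cos ((n + 1 : ℤ) * θ - z * sin θ)) := by
    rw [← intervalIntegral.integral_add, ← intervalIntegral.integral_const_mul,
      ← intervalIntegral.integral_const_mul, ← intervalIntegral.integral_sub]
    · congr 1
      ext θ
      have e1 : ((n - 1 : ℤ) : ℝ) * θ - z * sin θ = (n * θ - z * sin θ) - θ := by
        push_cast; ring
      have e2 : ((n + 1 : ℤ) : ℝ) * θ - z * sin θ = (n * θ - z * sin θ) + θ := by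
        push_cast; ring
      rw [e1, e2, cos_sub (_ - _), cos_add]
      ring
    all_goals exact Continuous.intervalIntegrable (by fun_prop) _ _
  unfold besselZ
  linear_combination (2 / π) * (h0 - h1)

lemma abs_mul_abs_besselZ_le (n : ℤ) (z : ℝ) :
    2 * (|(n : ℝ)| * |besselZ n z|) ≤ |z| * (|besselZ (n - 1) z| + |besselZ (n + 1) z|) := by
  have h := congrArg abs (besselZ_recurrence n z)
  rw [abs_mul, abs_mul, abs_mul, abs_two, mul_assoc] at h
  rw [h]
  gcongr
  exact abs_add_le _ _

lemma sq_mul_abs_besselZ_le (n : ℤ) (z : ℝ) :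
    (n : ℝ) ^ 2 * |besselZ n z| ≤ |z| * (|z| + 1) := by
  have hb : ∀ k : ℤ, |(k : ℝ)| * |besselZ k z| ≤ |z| := fun k => by
    nlinarith [abs_mul_abs_besselZ_le k z, abs_besselZ_le_one (k - 1) z,
      abs_besselZ_le_one (k + 1) z, abs_nonneg z]
  have hs : ∀ k : ℤ, |(n : ℝ) - k| ≤ 1 → |(n : ℝ)| * |besselZ k z| ≤ |z| + 1 := fun k hk => by
    have h1 : |(n : ℝ)| ≤ |(k : ℝ)| + 1 := by
      linarith [abs_sub_abs_le_abs_sub (n : ℝ) k]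
    nlinarith [hb k, abs_besselZ_le_one k z, abs_nonneg (besselZ k z)]
  have h1 := hs (n - 1) (by simp)
  have h2 := hs (n + 1) (by simp)
  have h3 := mul_le_mul_of_nonneg_left (abs_mul_abs_besselZ_le n z) (abs_nonneg (n : ℝ))
  have h4 := mul_le_mul_of_nonneg_left (add_le_add h1 h2) (abs_nonneg z)
  rw [← sq_abs]
  linarith

lemma summable_besselZ (z : ℝ) : Summable fun n : ℤ => besselZ n z := by
  have h : Summable fun n : ℤ => |z| * (|z| + 1) * (1 / (n : ℝ) ^ 2) :=
    (Real.summable_one_div_int_pow.mpr one_lt_two).mul_left _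
  refine h.of_norm_bounded_eventually ?_
  filter_upwards [(Set.finite_singleton (0 : ℤ)).compl_mem_cofinite] with n hn
  have hn' : (n : ℝ) ≠ 0 := by simpa using hn
  rw [mul_one_div, le_div_iff₀ (by positivity), mul_comm]
  exact sq_mul_abs_besselZ_le n z

/-- The function `θ ↦ exp (i z sin θ)` on the circle of length `2π`. -/
noncomputable def expSin (z : ℝ) : C(AddCircle (2 * π), ℂ) where
  toFun := Function.Periodic.lift
    (f := fun θ : ℝ => Complex.exp ((z * sin θ : ℝ) * Complex.I))
    (fun θ => by simp only [sin_add_two_pi])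
  continuous_toFun := continuous_coinduced_dom.mpr (by
    change Continuous fun θ : ℝ => Complex.exp ((z * sin θ : ℝ) * Complex.I)
    fun_prop)

lemma expSin_coe (z θ : ℝ) :
    expSin z (θ : AddCircle (2 * π)) = Complex.exp ((z * sin θ : ℝ) * Complex.I) := rfl

lemma fourier_two_pi (n : ℤ) (θ : ℝ) :
    fourier n (θ : AddCircle (2 * π)) = Complex.exp ((n * θ : ℝ) * Complex.I) := by
  rw [fourier_coe_apply]
  congr 1
  have : (π : ℂ) ≠ 0 := by exact_mod_cast pi_ne_zero
  push_cast
  field_simp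

lemma fourierCoeff_expSin [Fact (0 < 2 * π)] (z : ℝ) (n : ℤ) :
    fourierCoeff (expSin z) n = besselZ n z := by
  rw [fourierCoeff_eq_intervalIntegral _ n (-π), show -π + 2 * π = π by ring]
  set g : ℝ → ℂ := fun θ => Complex.exp ((-(n * θ - z * sin θ) : ℝ) * Complex.I) with hg
  have e : ∀ θ : ℝ, fourier (-n) (θ : AddCircle (2 * π)) • expSin z (θ : AddCircle (2 * π))
      = g θ := fun θ => by
    rw [fourier_two_pi, expSin_coe, smul_eq_mul, ← Complex.exp_add, hg]
    congr 1
    push_cast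
    ring
  have hgi : ∀ a b, IntervalIntegrable g MeasureTheory.volume a b := fun a b =>
    Continuous.intervalIntegrable (by fun_prop) _ _
  have hgn : ∀ a b, IntervalIntegrable (fun θ => g (-θ)) MeasureTheory.volume a b := fun a b =>
    Continuous.intervalIntegrable (by fun_prop) _ _
  have hneg := integral_comp_neg (a := 0) (b := π) g
  rw [neg_zero] at hneg
  simp only [e]
  rw [← integral_add_adjacent_intervals (hgi (-π) 0) (hgi 0 π), ← hneg,
    ← intervalIntegral.integral_add (hgn _ _) (hgi _ _)]
  have hsum : ∀ θ, g (-θ) + g θ = ((2 * cos (n * θ - z * sin θ) : ℝ) : ℂ) := fun θ => by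
    have := Complex.two_cos (n * θ - z * sin θ : ℝ)
    simp only [hg, sin_neg]
    push_cast at this ⊢
    rw [this]
    congr 2
    ring
  simp only [hsum]
  rw [intervalIntegral.integral_ofReal, intervalIntegral.integral_const_mul, besselZ,
    Complex.real_smul]
  push_cast
  have : (π : ℂ) ≠ 0 := by exact_mod_cast pi_ne_zero
  field_simp

lemma hasSum_besselZ_mul_exp (z θ : ℝ) :
    HasSum (fun n : ℤ => (besselZ n z : ℂ) * Complex.exp ((n * θ : ℝ) * Complex.I))
      (Complex.exp ((z * sin θ : ℝ) * Complex.I)) := by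
  have : Fact (0 < 2 * π) := ⟨two_pi_pos⟩
  have hc : fourierCoeff (expSin z) = fun n => (besselZ n z : ℂ) :=
    funext (fourierCoeff_expSin z)
  have h := has_pointwise_sum_fourier_series_of_summable (f := expSin z)
    (by rw [hc]; exact Complex.ofRealCLM.summable (summable_besselZ z)) (θ : AddCircle (2 * π))
  simpa only [hc, fourier_two_pi, expSin_coe, smul_eq_mul] using h

lemma hasSum_cos_int (z θ : ℝ) :
    HasSum (fun n : ℤ => besselZ n z * cos (n * θ)) (cos (z * sin θ)) := by
  have h := Complex.hasSum_re (hasSum_besselZ_mul_exp z θ)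
  simpa only [Complex.re_ofReal_mul, Complex.exp_ofReal_mul_I_re] using h

lemma hasSum_sin_int (z θ : ℝ) :
    HasSum (fun n : ℤ => besselZ n z * sin (n * θ)) (sin (z * sin θ)) := by
  have h := Complex.hasSum_im (hasSum_besselZ_mul_exp z θ)
  simpa only [Complex.im_ofReal_mul, Complex.exp_ofReal_mul_I_im] using h

/-- Bessel's series in even orders, obtained by folding the Fourier series at `n = 0`; the sum over
all `j` counts the order-zero term twice. -/
lemma hasSum_cos_even (z θ : ℝ) :
    HasSum (fun j : ℕ => 2 * besselJ (2 * j) z * cos ((2 * j : ℕ) * θ))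
      (cos (z * sin θ) + besselJ 0 z) := by
  have h := (hasSum_cos_int z θ).nat_add_neg
  have h0 : besselZ 0 z = besselJ 0 z := by simpa using besselZ_natCast 0 z
  rw [Int.cast_zero, zero_mul, cos_zero, mul_one, h0] at h
  have hinj : Function.Injective fun j : ℕ => 2 * j := fun a b hab => by simpa using hab
  rw [← hinj.hasSum_iff] at h
  · convert h using 1
    ext j
    have heven : Even (2 * j) := even_two_mul j
    simp only [Function.comp_apply]
    rw [besselZ_neg, zpow_natCast, heven.neg_one_pow, besselZ_natCast, Int.cast_neg, neg_mul,
      cos_neg, Int.cast_natCast]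
    ring
  · intro n hn
    have hodd : Odd n := by
      rw [← Nat.not_even_iff_odd]
      rintro ⟨k, rfl⟩
      exact hn ⟨k, by simp only; ring⟩
    rw [besselZ_neg, zpow_natCast, hodd.neg_one_pow]
    rw [Int.cast_neg, neg_mul ((n : ℤ) : ℝ), cos_neg]
    ring

/-- Bessel's series in odd orders, obtained by folding the Fourier series at `n = 0`. -/
lemma hasSum_sin_odd (z θ : ℝ) :
    HasSum (fun m : ℕ => 2 * besselJ (2 * m + 1) z * sin ((2 * m + 1 : ℕ) * θ))
      (sin (z * sin θ)) := by
  have h := (hasSum_sin_int z θ).nat_add_neg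
  rw [Int.cast_zero, zero_mul, sin_zero, mul_zero, add_zero] at h
  have hinj : Function.Injective fun m : ℕ => 2 * m + 1 := fun a b hab => by simpa using hab
  rw [← hinj.hasSum_iff] at h
  · convert h using 1
    ext m
    have hodd : Odd (2 * m + 1) := odd_two_mul_add_one m
    simp only [Function.comp_apply]
    rw [besselZ_neg, zpow_natCast, hodd.neg_one_pow, besselZ_natCast, Int.cast_neg,
      neg_mul (((2 * m + 1 : ℕ) : ℤ) : ℝ), sin_neg, Int.cast_natCast]
    ring
  · intro n hn
    have heven : Even n := by
      rw [← Nat.not_odd_iff_even]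
      rintro ⟨k, rfl⟩
      exact hn ⟨k, rfl⟩
    rw [besselZ_neg, zpow_natCast, heven.neg_one_pow, Int.cast_neg, neg_mul ((n : ℤ) : ℝ), sin_neg]
    ring

/-- Real and imaginary parts of the Jacobi–Anger expansion: for all real `z, φ`,
`cos(z cos φ) = J₀(z) + 2 Σ_{m=1}^{∞} (−1)^m J_{2m}(z) cos(2mφ)` and
`sin(z cos φ) = 2 Σ_{m=0}^{∞} (−1)^m J_{2m+1}(z) cos((2m+1)φ)`, both series converging.
(The first sum over `m ≥ 1` is indexed here by `m = j + 1`, `j : ℕ`.) -/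
theorem stmt14 (z φ : ℝ) :
    HasSum
      (fun j : ℕ => 2 * (-1 : ℝ) ^ (j + 1) * besselJ (2 * (j + 1)) z *
        Real.cos ((2 * (j + 1) : ℕ) * φ))
      (Real.cos (z * Real.cos φ) - besselJ 0 z) ∧
    HasSum
      (fun m : ℕ => 2 * (-1 : ℝ) ^ m * besselJ (2 * m + 1) z *
        Real.cos ((2 * m + 1 : ℕ) * φ))
      (Real.sin (z * Real.cos φ)) := by
  constructor
  · have h := (hasSum_nat_add_iff' 1).mpr (hasSum_cos_even z (φ + π / 2))
    rw [sin_add_pi_div_two] at h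
    have hv : cos (z * cos φ) - besselJ 0 z = cos (z * cos φ) + besselJ 0 z -
        ∑ i ∈ Finset.range 1, 2 * besselJ (2 * i) z * cos ((2 * i : ℕ) * (φ + π / 2)) := by
      simp only [Finset.sum_range_one, mul_zero, Nat.cast_zero, zero_mul, cos_zero]
      ring
    rw [hv]
    refine Eq.mpr (congrArg (fun f => HasSum f _) (funext fun j => ?_)) h
    have e : ((2 * (j + 1) : ℕ) : ℝ) * (φ + π / 2)
        = (2 * (j + 1) : ℕ) * φ + (j + 1 : ℕ) * π := by
      push_cast; ring
    rw [e, cos_add_nat_mul_pi]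
    ring
  · have h := hasSum_sin_odd z (φ + π / 2)
    rw [sin_add_pi_div_two] at h
    convert h using 1
    ext m
    have e : ((2 * m + 1 : ℕ) : ℝ) * (φ + π / 2)
        = ((2 * m + 1 : ℕ) * φ + π / 2) + m * π := by
      push_cast; ring
    rw [e, sin_add_nat_mul_pi, sin_add_pi_div_two]
    ring
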